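/- Let A be an n-by-n reciprocal matrix and let S be any nonempty subset of {1, …, n} with s = |S|. Then the geometric mean of the columns of A indexed by S, i.e., the vector w with w_i = (∏_{j∈S} a_ij)^{1/s}, is efficient for A. -/

import Mathlib

/-- An n-by-n positive matrix is reciprocal if `A j i = 1 / A i j` for all `i, j`. -/
def Reciprocal {n : ℕ} (A : Matrix (Fin n) (Fin n) ℝ) : Prop :=
  (∀ i j, 0 < A i j) ∧ ∀ i j, A j i = 1 / A i j

/-- A positive vector `w` is efficient for a reciprocal matrix `A` if every positive
vector `v` with `|v i / v j - A i j| ≤ |w i / w j - A i j|` entrywise is a positive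
scalar multiple of `w`. -/
def Efficient {n : ℕ} (A : Matrix (Fin n) (Fin n) ℝ) (w : Fin n → ℝ) : Prop :=
  ∀ v : Fin n → ℝ, (∀ i, 0 < v i) →
    (∀ i j, |v i / v j - A i j| ≤ |w i / w j - A i j|) →
    ∃ c : ℝ, 0 < c ∧ v = fun i => c * w i

/-!
Pass to logarithms. The residuals `r i j = log (A i j) - log (w i / w j)` form a skew-symmetric
matrix, and `w` being a weighted geometric mean of columns with weights `μ` gives
`∑ j, μ j * r i j = 0` for every `i`. If `v` approximates `A` at least as well as `w` and
`u i = log (v i / w i)`, then `(u i - u j) * r i j` is positive whenever `u i ≠ u j`. By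
skew-symmetry the sum of `μ i * μ j * ((u i - u j) * r i j)` vanishes, so `u` is constant on the
support of `μ`; once this is known, the sum over `j` of `μ j * ((u i - u j) * r i j)` vanishes for
each single `i`, so `u` is constant everywhere.
-/

section SkewSymmetric

variable {ι R M : Type*} {S : Finset ι} {μ u : ι → R} {r : ι → ι → R}

lemma sum_sum_eq_zero_of_skew [AddCommGroup M] [IsAddTorsionFree M] {f : ι → ι → M}
    (hf : ∀ i j, f j i = -f i j) :
    ∑ i ∈ S, ∑ j ∈ S, f i j = 0 := by
  refine self_eq_neg.mp ?_
  calc ∑ i ∈ S, ∑ j ∈ S, f i j = ∑ i ∈ S, ∑ j ∈ S, f j i := Finset.sum_comm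
    _ = -∑ i ∈ S, ∑ j ∈ S, f i j := by
      simp only [← Finset.sum_neg_distrib, ← hf]

variable [CommRing R]

lemma sum_sum_mul_sub_mul_eq_zero_of_skew (hr : ∀ i j, r j i = -r i j)
    (hrow : ∀ i ∈ S, ∑ j ∈ S, μ j * r i j = 0) :
    ∑ i ∈ S, ∑ j ∈ S, μ i * μ j * ((u i - u j) * r i j) = 0 := by
  have hsum : ∑ i ∈ S, ∑ j ∈ S, μ i * u i * (μ j * r i j) = 0 :=
    Finset.sum_eq_zero fun i hi => by rw [← Finset.mul_sum, hrow i hi, mul_zero]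
  calc ∑ i ∈ S, ∑ j ∈ S, μ i * μ j * ((u i - u j) * r i j)
      = ∑ i ∈ S, ∑ j ∈ S, (μ i * u i * (μ j * r i j) + μ j * u j * (μ i * r j i)) :=
        Finset.sum_congr rfl fun i _ => Finset.sum_congr rfl fun j _ => by rw [hr i j]; ring
    _ = ∑ i ∈ S, ∑ j ∈ S, μ i * u i * (μ j * r i j)
          + ∑ i ∈ S, ∑ j ∈ S, μ i * u i * (μ j * r i j) := by
        simp only [Finset.sum_add_distrib]
        rw [Finset.sum_comm (f := fun i j => μ j * u j * (μ i * r j i))]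
    _ = 0 := by rw [hsum, add_zero]

variable [LinearOrder R]

lemma sub_mul_nonneg_of_ne_imp_pos (hsign : ∀ i j, u i ≠ u j → 0 < (u i - u j) * r i j)
    (i j : ι) : 0 ≤ (u i - u j) * r i j := by
  rcases eq_or_ne (u i) (u j) with heq | hne
  · rw [heq, sub_self, zero_mul]
  · exact (hsign i j hne).le

variable [IsStrictOrderedRing R]

lemma eq_of_skew_of_pos_weight_of_pos_weight (hr : ∀ i j, r j i = -r i j) (hμ : ∀ i ∈ S, 0 ≤ μ i)
    (hrow : ∀ i ∈ S, ∑ j ∈ S, μ j * r i j = 0)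
    (hsign : ∀ i j, u i ≠ u j → 0 < (u i - u j) * r i j)
    {i j : ι} (hi : i ∈ S) (hj : j ∈ S) (hμi : 0 < μ i) (hμj : 0 < μ j) : u i = u j := by
  have hterm : ∀ i ∈ S, ∀ j ∈ S, 0 ≤ μ i * μ j * ((u i - u j) * r i j) := fun i hi j hj =>
    mul_nonneg (mul_nonneg (hμ i hi) (hμ j hj)) (sub_mul_nonneg_of_ne_imp_pos hsign i j)
  have hinner : ∑ j ∈ S, μ i * μ j * ((u i - u j) * r i j) = 0 :=
    (Finset.sum_eq_zero_iff_of_nonneg fun i hi => Finset.sum_nonneg (hterm i hi)).mp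
      (sum_sum_mul_sub_mul_eq_zero_of_skew hr hrow) i hi
  have hzero : μ i * μ j * ((u i - u j) * r i j) = 0 :=
    (Finset.sum_eq_zero_iff_of_nonneg (hterm i hi)).mp hinner j hj
  by_contra hne
  exact (mul_pos (mul_pos hμi hμj) (hsign i j hne)).ne' hzero

lemma eq_of_skew_of_pos_weight (hr : ∀ i j, r j i = -r i j) (hμ : ∀ i ∈ S, 0 ≤ μ i)
    (hrow : ∀ i, ∑ j ∈ S, μ j * r i j = 0)
    (hsign : ∀ i j, u i ≠ u j → 0 < (u i - u j) * r i j)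
    (i : ι) {k : ι} (hk : k ∈ S) (hμk : 0 < μ k) : u i = u k := by
  have hsupp : ∀ j ∈ S, μ j * ((u i - u j) * r i j) = (u i - u k) * (μ j * r i j) := by
    intro j hj
    rcases (hμ j hj).eq_or_lt with hμj | hμj
    · simp only [← hμj, zero_mul, mul_zero]
    · rw [eq_of_skew_of_pos_weight_of_pos_weight hr hμ (fun i _ => hrow i) hsign hj hk hμj hμk]
      ring
  have hsum : ∑ j ∈ S, μ j * ((u i - u j) * r i j) = 0 := by
    rw [Finset.sum_congr rfl hsupp, ← Finset.mul_sum, hrow, mul_zero]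
  have hzero : μ k * ((u i - u k) * r i k) = 0 :=
    (Finset.sum_eq_zero_iff_of_nonneg fun j hj =>
      mul_nonneg (hμ j hj) (sub_mul_nonneg_of_ne_imp_pos hsign i j)).mp hsum k hk
  by_contra hne
  exact (mul_pos hμk (hsign i k hne)).ne' hzero

end SkewSymmetric

lemma sub_mul_sub_pos_of_abs_sub_le {R : Type*} [CommRing R] [LinearOrder R]
    [IsStrictOrderedRing R] {x y a : R} (hxy : y ≠ x) (h : |y - a| ≤ |x - a|) :
    0 < (y - x) * (a - x) := by
  have hsq : (y - a) ^ 2 ≤ (x - a) ^ 2 := sq_le_sq.mpr h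
  have hpos : 0 < (y - x) ^ 2 := sq_pos_of_ne_zero (sub_ne_zero.mpr hxy)
  linarith [show (y - a) ^ 2 - (x - a) ^ 2 = (y - x) ^ 2 - 2 * ((y - x) * (a - x)) by ring]

lemma log_sub_mul_log_sub_pos {x y a : ℝ} (hx : 0 < x) (hy : 0 < y) (ha : 0 < a)
    (h : 0 < (y - x) * (a - x)) :
    0 < (Real.log y - Real.log x) * (Real.log a - Real.log x) := by
  simpa only [mul_pos_iff, sub_pos, sub_neg, Real.log_lt_log_iff, hx, hy, ha] using h

section Matrix

variable {n : ℕ} {A : Matrix (Fin n) (Fin n) ℝ} {S : Finset (Fin n)} {v w μ : Fin n → ℝ}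

/-- The logarithmic error made when the entry `A i j` is approximated by `w i / w j`. It is used
for positive `A` and `w`, where `Real.log` is the genuine logarithm. -/
noncomputable def logResidual (A : Matrix (Fin n) (Fin n) ℝ) (w : Fin n → ℝ) (i j : Fin n) : ℝ :=
  Real.log (A i j) - Real.log (w i / w j)

/-- The weighted geometric mean of the columns of `A` indexed by `S`, with weights `μ`. -/
noncomputable def weightedGeomMean (A : Matrix (Fin n) (Fin n) ℝ) (S : Finset (Fin n))
    (μ : Fin n → ℝ) (i : Fin n) : ℝ :=
  ∏ j ∈ S, A i j ^ μ j

lemma Reciprocal.log_swap (hA : Reciprocal A) (i j : Fin n) :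
    Real.log (A j i) = -Real.log (A i j) := by
  rw [hA.2 i j, one_div, Real.log_inv]

lemma Reciprocal.logResidual_swap (hA : Reciprocal A) (w : Fin n → ℝ) (i j : Fin n) :
    logResidual A w j i = -logResidual A w i j := by
  rw [logResidual, logResidual, hA.log_swap i j, ← inv_div (w i), Real.log_inv]
  ring

lemma log_div_sub_mul_logResidual_pos (hA : ∀ i j, 0 < A i j) (hw : ∀ i, 0 < w i)
    (hv : ∀ i, 0 < v i) {i j : Fin n} (hle : |v i / v j - A i j| ≤ |w i / w j - A i j|)
    (hne : Real.log (v i / w i) ≠ Real.log (v j / w j)) :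
    0 < (Real.log (v i / w i) - Real.log (v j / w j)) * logResidual A w i j := by
  have hlog : Real.log (v i / w i) - Real.log (v j / w j)
      = Real.log (v i / v j) - Real.log (w i / w j) := by
    simp only [Real.log_div, (hv _).ne', (hw _).ne', ne_eq, not_false_eq_true]
    ring
  have hratio : v i / v j ≠ w i / w j := fun heq =>
    hne (sub_eq_zero.mp (by rw [hlog, heq, sub_self]))
  rw [hlog, logResidual]
  exact log_sub_mul_log_sub_pos (div_pos (hw i) (hw j)) (div_pos (hv i) (hv j)) (hA i j)
    (sub_mul_sub_pos_of_abs_sub_le hratio hle)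

theorem Reciprocal.efficient_of_sum_mul_logResidual_eq_zero (hA : Reciprocal A)
    (hw : ∀ i, 0 < w i) (hμ : ∀ j ∈ S, 0 ≤ μ j) (hμS : ∑ j ∈ S, μ j ≠ 0)
    (hrow : ∀ i, ∑ j ∈ S, μ j * logResidual A w i j = 0) : Efficient A w := by
  intro v hv hle
  obtain ⟨k, hk, hμk⟩ := Finset.exists_ne_zero_of_sum_ne_zero hμS
  refine ⟨v k / w k, div_pos (hv k) (hw k), funext fun i => ?_⟩
  have hlog : Real.log (v i / w i) = Real.log (v k / w k) :=
    eq_of_skew_of_pos_weight (u := fun i => Real.log (v i / w i)) (hA.logResidual_swap w) hμ hrow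
      (fun i j => log_div_sub_mul_logResidual_pos hA.1 hw hv (hle i j)) i hk
      ((hμ k hk).lt_of_ne' hμk)
  have hratio : v i / w i = v k / w k :=
    Real.log_injOn_pos (div_pos (hv i) (hw i)) (div_pos (hv k) (hw k)) hlog
  rw [← hratio, div_mul_cancel₀ _ (hw i).ne']

lemma weightedGeomMean_pos (hA : ∀ i j, 0 < A i j) (S : Finset (Fin n)) (μ : Fin n → ℝ)
    (i : Fin n) : 0 < weightedGeomMean A S μ i :=
  Finset.prod_pos fun j _ => Real.rpow_pos_of_pos (hA i j) _

lemma log_weightedGeomMean (hA : ∀ i j, 0 < A i j) (S : Finset (Fin n)) (μ : Fin n → ℝ)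
    (i : Fin n) : Real.log (weightedGeomMean A S μ i) = ∑ j ∈ S, μ j * Real.log (A i j) := by
  rw [weightedGeomMean, Real.log_prod fun j _ => (Real.rpow_pos_of_pos (hA i j) _).ne']
  exact Finset.sum_congr rfl fun j _ => Real.log_rpow (hA i j) _

lemma Reciprocal.sum_mul_log_weightedGeomMean (hA : Reciprocal A) (S : Finset (Fin n))
    (μ : Fin n → ℝ) : ∑ j ∈ S, μ j * Real.log (weightedGeomMean A S μ j) = 0 := by
  simp only [log_weightedGeomMean hA.1, Finset.mul_sum]
  exact sum_sum_eq_zero_of_skew fun i j => by rw [hA.log_swap i j]; ring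

lemma Reciprocal.sum_mul_logResidual_weightedGeomMean (hA : Reciprocal A)
    (hμS : ∑ j ∈ S, μ j = 1) (i : Fin n) :
    ∑ j ∈ S, μ j * logResidual A (weightedGeomMean A S μ) i j = 0 := by
  have hpos := weightedGeomMean_pos hA.1 S μ
  simp only [logResidual, Real.log_div (hpos _).ne' (hpos _).ne', mul_sub, Finset.sum_sub_distrib]
  rw [← log_weightedGeomMean hA.1, ← Finset.sum_mul, hμS, hA.sum_mul_log_weightedGeomMean]
  ring

lemma weightedGeomMean_const (hA : ∀ i j, 0 ≤ A i j) (S : Finset (Fin n)) (t : ℝ) :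
    weightedGeomMean A S (fun _ => t) = fun i => (∏ j ∈ S, A i j) ^ t :=
  funext fun i => Real.finsetProd_rpow S (A i) (fun j _ => hA i j) t

theorem stmt_9_general (hA : Reciprocal A) (hμ : ∀ j ∈ S, 0 ≤ μ j) (hμS : ∑ j ∈ S, μ j = 1) :
    Efficient A (weightedGeomMean A S μ) :=
  hA.efficient_of_sum_mul_logResidual_eq_zero (weightedGeomMean_pos hA.1 S μ) hμ
    (hμS ▸ one_ne_zero) (hA.sum_mul_logResidual_weightedGeomMean hμS)

end Matrix

/-- The geometric mean of any nonempty collection of distinct columns of a reciprocal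
matrix is efficient for it. -/
theorem stmt_9 {n : ℕ} (A : Matrix (Fin n) (Fin n) ℝ) (hA : Reciprocal A)
    (S : Finset (Fin n)) (hS : S.Nonempty) :
    Efficient A (fun i => (∏ j ∈ S, A i j) ^ ((1 : ℝ) / S.card)) := by
  rw [← weightedGeomMean_const fun i j => (hA.1 i j).le]
  exact stmt_9_general hA (fun _ _ => by positivity) (by simp [hS.ne_empty])
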